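/- For the structure A = ({1_0,2_0,3_0,1_1,2_1,3_1}; R, S) with R(a_i,b_j) ↔ (i = j ∧ a ≠ b) and S(a_i,b_j) ↔ i ≠ j, define the unary operation α(a_i) := a_{1−i} and the ternary operation s(a_i, b_j, c_k) := c_k if i = j and a_i if i ≠ j. Then α and s are polymorphisms of A and they satisfy the identity s(x,x,y) = s(y,α(y),x) for all x, y ∈ A (both sides equal y). -/

import Mathlib

/-- R(a_i, b_j) holds iff i = j and a ≠ b: two disjoint copies of K₃. -/
def Rrel (x y : Fin 3 × Fin 2) : Prop := x.2 = y.2 ∧ x.1 ≠ y.1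

/-- S(a_i, b_j) holds iff i ≠ j. -/
def Srel (x y : Fin 3 × Fin 2) : Prop := x.2 ≠ y.2

/-- α(a_i) = a_{1-i}. -/
def alphaOp (x : Fin 3 × Fin 2) : Fin 3 × Fin 2 := (x.1, 1 - x.2)

/-- s(a_i, b_j, c_k) = c_k if i = j, and a_i if i ≠ j. -/
def sOp (x y z : Fin 3 × Fin 2) : Fin 3 × Fin 2 := if x.2 = y.2 then z else x

/-! Arguments related by `R` have equal indices, and arguments related by `S` have opposite ones.
Either way the test `i = j` in `s` has the same outcome on two related argument tuples, so `s`
selects the same coordinate from both. -/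

section

variable {x y z x₁ x₂ x₃ y₁ y₂ y₃ : Fin 3 × Fin 2}

theorem srel_iff_snd_eq_one_sub : Srel x y ↔ y.2 = 1 - x.2 := by
  have ne_iff_eq_one_sub : ∀ i j : Fin 2, i ≠ j ↔ j = 1 - i := by decide
  exact ne_iff_eq_one_sub x.2 y.2

theorem srel_alphaOp_right (x : Fin 3 × Fin 2) : Srel x (alphaOp x) :=
  srel_iff_snd_eq_one_sub.mpr rfl

theorem alphaOp_snd_eq_iff : (alphaOp x).2 = (alphaOp y).2 ↔ x.2 = y.2 :=
  sub_right_inj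

theorem rrel_alphaOp_iff : Rrel (alphaOp x) (alphaOp y) ↔ Rrel x y :=
  and_congr_left' alphaOp_snd_eq_iff

theorem srel_alphaOp_iff : Srel (alphaOp x) (alphaOp y) ↔ Srel x y :=
  alphaOp_snd_eq_iff.not

theorem sOp_of_snd_eq (h : x.2 = y.2) : sOp x y z = z :=
  if_pos h

theorem sOp_of_srel (h : Srel x y) : sOp x y z = x :=
  if_neg h

theorem rel_sOp_of_snd_eq_iff {T : Fin 3 × Fin 2 → Fin 3 × Fin 2 → Prop}
    (h : x₁.2 = x₂.2 ↔ y₁.2 = y₂.2) (h₁ : T x₁ y₁) (h₃ : T x₃ y₃) :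
    T (sOp x₁ x₂ x₃) (sOp y₁ y₂ y₃) := by
  by_cases hx : x₁.2 = x₂.2
  · rwa [sOp_of_snd_eq hx, sOp_of_snd_eq (h.mp hx)]
  · rwa [sOp_of_srel hx, sOp_of_srel (mt h.mpr hx)]

theorem rrel_sOp (h₁ : Rrel x₁ y₁) (h₂ : Rrel x₂ y₂) (h₃ : Rrel x₃ y₃) :
    Rrel (sOp x₁ x₂ x₃) (sOp y₁ y₂ y₃) := by
  have same_test : x₁.2 = x₂.2 ↔ y₁.2 = y₂.2 := by rw [h₁.1, h₂.1]
  exact rel_sOp_of_snd_eq_iff same_test h₁ h₃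

theorem srel_sOp (h₁ : Srel x₁ y₁) (h₂ : Srel x₂ y₂) (h₃ : Srel x₃ y₃) :
    Srel (sOp x₁ x₂ x₃) (sOp y₁ y₂ y₃) := by
  have same_test : x₁.2 = x₂.2 ↔ y₁.2 = y₂.2 := by
    rw [srel_iff_snd_eq_one_sub.mp h₁, srel_iff_snd_eq_one_sub.mp h₂, sub_right_inj]
  exact rel_sOp_of_snd_eq_iff same_test h₁ h₃

theorem sOp_self_left (x y : Fin 3 × Fin 2) : sOp x x y = y :=
  sOp_of_snd_eq rfl

theorem sOp_alphaOp (x y : Fin 3 × Fin 2) : sOp y (alphaOp y) x = y :=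
  sOp_of_srel (srel_alphaOp_right y)

end

/-- α and s are polymorphisms of A = (A; R, S) and satisfy the non-trivial identity
s(x,x,y) ≈ s(y,α(y),x), both sides being equal to y. -/
theorem stmt_16 :
    (∀ x y, Rrel x y → Rrel (alphaOp x) (alphaOp y)) ∧
    (∀ x y, Srel x y → Srel (alphaOp x) (alphaOp y)) ∧
    (∀ x₁ x₂ x₃ y₁ y₂ y₃, Rrel x₁ y₁ → Rrel x₂ y₂ → Rrel x₃ y₃ →
      Rrel (sOp x₁ x₂ x₃) (sOp y₁ y₂ y₃)) ∧
    (∀ x₁ x₂ x₃ y₁ y₂ y₃, Srel x₁ y₁ → Srel x₂ y₂ → Srel x₃ y₃ →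
      Srel (sOp x₁ x₂ x₃) (sOp y₁ y₂ y₃)) ∧
    (∀ x y, sOp x x y = y ∧ sOp y (alphaOp y) x = y) :=
  ⟨fun _ _ => rrel_alphaOp_iff.mpr,
    fun _ _ => srel_alphaOp_iff.mpr,
    fun _ _ _ _ _ _ => rrel_sOp,
    fun _ _ _ _ _ _ => srel_sOp,
    fun x y => ⟨sOp_self_left x y, sOp_alphaOp x y⟩⟩
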